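/- arXiv:1310.6658 — 3 statements merged into one kernel-verified Lean document; each statement's English description precedes it below -/
import Mathlib

section
/- Let n be even and let D = θ^n + Σ_{k=1}^m z^k P_k(θ) with polynomials P_k ∈ ℂ[T] of degree at most n. Then D satisfies the Yifan-Yang condition D ∘ z = z ∘ D^∨ if and only if each P_k has the form P_k(T) = Σ_{j=0}^{n/2} d_{k,j} (T + k/2)^{2j} for some constants d_{k,j} ∈ ℂ; i.e., D = θ^n + Σ_{k=1}^m z^k Σ_{j=0}^{n/2} d_{k,j}(θ + k/2)^{2j}. -/
/-! Since `θ ∘ z = z ∘ (θ + 1)`, moving `z` to the left through `D` turns the Yifan-Yang condition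
into `∑ z^(k+1) P_k(θ + 1) = ∑ z^(k+1) P_k(-θ - k - 1)`; the leading terms `(θ + 1)^n` and
`(-θ - 1)^n` agree because `n` is even. Evaluating on the monomials `z^l`, which are eigenvectors
of `θ`, and comparing coefficients gives `P_k(l + 1) = P_k(-(l + 1) - k)` for every natural `l`, so
the condition says exactly that every `P_k` is invariant under `T ↦ -T - k` (`yy_iff_symm`).
After the shift `T ↦ T - k/2` this is evenness, i.e. the vanishing of all odd coefficients
(`comp_eq_self_iff_exists`). -/

open Finset Polynomial

/-- The multiplication-by-`a` operator on the field `ℂ(z)` of rational functions,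
as a `ℂ`-linear endomorphism. -/
noncomputable def mulOp (a : RatFunc ℂ) : Module.End ℂ (RatFunc ℂ) :=
  LinearMap.mulLeft ℂ a

/-- A sum over `0, …, 2h` of a sequence vanishing at odd indices only sees the even indices. -/
lemma sum_range_even {M : Type*} [AddCommMonoid M] (f : ℕ → M) (hf : ∀ j, f (2 * j + 1) = 0)
    (h : ℕ) : ∑ i ∈ range (2 * h + 1), f i = ∑ j ∈ range (h + 1), f (2 * j) := by
  induction h with
  | zero => simp
  | succ h ih =>
    rw [show 2 * (h + 1) + 1 = 2 * h + 1 + 1 + 1 by ring, sum_range_succ, sum_range_succ, ih, hf,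
      sum_range_succ _ (h + 1), add_zero]
    rfl

/-- Polynomials of degree at most `2h` symmetric about `-a/2` are the combinations of even powers
of `T + a/2`. -/
lemma comp_eq_self_iff_exists (p : ℂ[X]) (a : ℂ) (h : ℕ) (hp : p.natDegree ≤ 2 * h) :
    p.comp (-X - C a) = p ↔
      ∃ d : ℕ → ℂ, p = ∑ j ∈ range (h + 1), C (d j) * (X + C (a / 2)) ^ (2 * j) := by
  constructor
  · intro hs
    set q := p.comp (X - C (a / 2)) with hq
    have ha : C a = C (a / 2) + C (a / 2) := by rw [← C_add, add_halves]
    have hqp : p = q.comp (X + C (a / 2)) := by simp [hq, comp_assoc]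
    have hqe : q.comp (-X) = q := by
      conv_rhs => rw [hq, ← hs]
      rw [hq, comp_assoc, comp_assoc]
      congr 1
      simp only [sub_comp, neg_comp, X_comp, C_comp]
      rw [ha]
      ring
    have hodd (j : ℕ) : q.coeff (2 * j + 1) = 0 := by
      have := congrArg (fun r : ℂ[X] => r.coeff (2 * j + 1)) hqe
      rw [show (-X : ℂ[X]) = C (-1) * X by simp] at this
      simp only [comp_C_mul_X_coeff, pow_succ, pow_mul] at this
      norm_num at this
      exact self_eq_neg.mp this.symm
    have hdeg : q.natDegree < 2 * h + 1 := by
      rw [hq, natDegree_comp, natDegree_X_sub_C]; omega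
    refine ⟨fun j => q.coeff (2 * j), ?_⟩
    rw [hqp]
    conv_lhs => rw [q.as_sum_range_C_mul_X_pow' hdeg]
    rw [sum_range_even _ (by simp [hodd])]
    simp
  · rintro ⟨d, rfl⟩
    simp only [Polynomial.sum_comp, mul_comp, C_comp, pow_comp, add_comp, X_comp, pow_mul]
    refine sum_congr rfl fun j _ => ?_
    have ha : C a = C (a / 2) + C (a / 2) := by rw [← C_add, add_halves]
    rw [ha]
    ring

lemma mulOp_apply (a f : RatFunc ℂ) : mulOp a f = a * f := rfl

lemma theta_mul_mulOp_X (Dz : Module.End ℂ (RatFunc ℂ))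
    (hLeib : ∀ f g : RatFunc ℂ, Dz (f * g) = f * Dz g + g * Dz f) (hX : Dz RatFunc.X = 1) :
    (mulOp RatFunc.X * Dz) * mulOp RatFunc.X = mulOp RatFunc.X * (mulOp RatFunc.X * Dz + 1) := by
  ext f
  simp only [Module.End.mul_apply, mulOp_apply, LinearMap.add_apply, Module.End.one_apply, hLeib,
    hX]
  ring

lemma aeval_mul_of_shift {R A : Type*} [CommRing R] [Ring A] [Algebra R A] (t x : A)
    (h : t * x = x * (t + 1)) (p : R[X]) : aeval t p * x = x * aeval (t + 1) p := by
  induction p using Polynomial.induction_on' with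
  | add p q hp hq => simp only [map_add, add_mul, mul_add, hp, hq]
  | monomial i c =>
    have hs : SemiconjBy x (t + 1) t := h.symm
    simp only [aeval_monomial]
    rw [mul_assoc, ← (hs.pow_right i).eq, ← mul_assoc, ← mul_assoc, Algebra.commutes]

lemma theta_pow_X (Dz : Module.End ℂ (RatFunc ℂ))
    (hLeib : ∀ f g : RatFunc ℂ, Dz (f * g) = f * Dz g + g * Dz f) (hX : Dz RatFunc.X = 1) (l : ℕ) :
    (mulOp RatFunc.X * Dz) (RatFunc.X ^ l) = (l : ℂ) • RatFunc.X ^ l := by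
  induction l with
  | zero =>
    have h1 : Dz 1 = 0 := by simpa using hLeib 1 1
    simp [Module.End.mul_apply, mulOp_apply, h1]
  | succ l ih =>
    simp only [Module.End.mul_apply, mulOp_apply] at ih ⊢
    rw [pow_succ, hLeib, hX, mul_add, mul_left_comm RatFunc.X RatFunc.X, ih]
    simp only [Algebra.smul_def, map_natCast]
    push_cast
    ring

lemma aeval_theta_pow_X (θ : Module.End ℂ (RatFunc ℂ))
    (hθ : ∀ l : ℕ, θ (RatFunc.X ^ l) = (l : ℂ) • RatFunc.X ^ l) (p : ℂ[X]) (l : ℕ) :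
    aeval θ p (RatFunc.X ^ l) = p.eval (l : ℂ) • RatFunc.X ^ l :=
  Module.End.aeval_apply_of_hasEigenvector
    ⟨Module.End.mem_eigenspace_iff.mpr (hθ l), pow_ne_zero _ RatFunc.X_ne_zero⟩

/-- Operators `∑ z^k Q_k(θ)` determine the polynomials `Q_k`. -/
lemma eq_of_sum_eq (θ : Module.End ℂ (RatFunc ℂ))
    (hθ : ∀ l : ℕ, θ (RatFunc.X ^ l) = (l : ℂ) • RatFunc.X ^ l) (s : Finset ℕ) (Q R : ℕ → ℂ[X])
    (h : ∑ k ∈ s, mulOp (RatFunc.X ^ k) * aeval θ (Q k)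
      = ∑ k ∈ s, mulOp (RatFunc.X ^ k) * aeval θ (R k)) :
    ∀ k ∈ s, Q k = R k := by
  intro k hk
  -- two polynomials agreeing at all natural numbers are equal
  refine Polynomial.eq_of_infinite_eval_eq _ _
    ((Set.infinite_range_of_injective (Nat.cast_injective (R := ℂ))).mono ?_)
  rintro _ ⟨l, rfl⟩
  have key (S : ℕ → ℂ[X]) :
      (∑ k ∈ s, mulOp (RatFunc.X ^ k) * aeval θ (S k)) (RatFunc.X ^ l)
        = algebraMap ℂ[X] (RatFunc ℂ) (∑ k ∈ s, C ((S k).eval (l : ℂ)) * X ^ (k + l)) := by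
    simp only [LinearMap.sum_apply, Module.End.mul_apply, mulOp_apply, map_sum, map_mul, map_pow,
      RatFunc.algebraMap_X, RatFunc.algebraMap_C, aeval_theta_pow_X θ hθ, RatFunc.smul_eq_C_mul]
    exact sum_congr rfl fun k _ => by ring
  have h2 := congrArg (fun T : Module.End ℂ (RatFunc ℂ) => T (RatFunc.X ^ l)) h
  simp only [key] at h2
  have h3 := congrArg (fun r : ℂ[X] => r.coeff (k + l)) (RatFunc.algebraMap_injective ℂ h2)
  simpa [finsetSum_coeff, coeff_X_pow, hk] using h3

/-- The Yifan-Yang condition in terms of the symmetry `T ↦ -T - k` of the coefficients. -/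
lemma yy_iff_symm (n : ℕ) (hn : Even n) (s : Finset ℕ) (P : ℕ → ℂ[X])
    (θ : Module.End ℂ (RatFunc ℂ)) (hθ : ∀ l : ℕ, θ (RatFunc.X ^ l) = (l : ℂ) • RatFunc.X ^ l)
    (hc : θ * mulOp RatFunc.X = mulOp RatFunc.X * (θ + 1)) :
    ((θ ^ n + ∑ k ∈ s, mulOp (RatFunc.X ^ k) * aeval θ (P k)) * mulOp RatFunc.X
        = (mulOp RatFunc.X *
            ((-θ - 1) ^ n + ∑ k ∈ s, mulOp (RatFunc.X ^ k) *
              aeval (-θ - (((k : ℂ) + 1) • 1 : Module.End ℂ (RatFunc ℂ))) (P k))))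
    ↔ ∀ k ∈ s, (P k).comp (-X - C (k : ℂ)) = P k := by
  have hcomm (k : ℕ) : mulOp (RatFunc.X ^ k) * mulOp RatFunc.X
      = mulOp RatFunc.X * mulOp (RatFunc.X ^ k) := by
    ext f
    simp only [Module.End.mul_apply, mulOp_apply]
    ring
  have hpow : θ ^ n * mulOp RatFunc.X = mulOp RatFunc.X * (-θ - 1) ^ n := by
    have h := aeval_mul_of_shift θ _ hc (X ^ n : ℂ[X])
    simp only [map_pow, aeval_X] at h
    rw [h, show -θ - 1 = -(θ + 1) by abel, hn.neg_pow]
  have hleft (k : ℕ) : mulOp (RatFunc.X ^ k) * aeval θ (P k) * mulOp RatFunc.X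
      = mulOp RatFunc.X * (mulOp (RatFunc.X ^ k) * aeval θ ((P k).comp (X + 1))) := by
    rw [mul_assoc, aeval_mul_of_shift θ _ hc, ← mul_assoc, hcomm, mul_assoc, aeval_comp]
    simp
  have hright (k : ℕ) : aeval (-θ - (((k : ℂ) + 1) • 1 : Module.End ℂ (RatFunc ℂ))) (P k)
      = aeval θ ((P k).comp (-X - C ((k : ℂ) + 1))) := by
    rw [aeval_comp, map_sub, map_neg, aeval_X, aeval_C, Algebra.algebraMap_eq_smul_one]
  have hinj (A B : Module.End ℂ (RatFunc ℂ)) (h : mulOp RatFunc.X * A = mulOp RatFunc.X * B) :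
      A = B := by
    refine LinearMap.ext fun f => mul_left_cancel₀ RatFunc.X_ne_zero ?_
    exact congrArg (fun T : Module.End ℂ (RatFunc ℂ) => T f) h
  -- the symmetries `P(T + 1) = P(-T - k - 1)` and `P(-T - k) = P(T)` differ by the shift
  -- `T ↦ T + 1`
  have hshift (k : ℕ) : (P k).comp (X + 1) = (P k).comp (-X - C ((k : ℂ) + 1)) ↔
      (P k).comp (-X - C (k : ℂ)) = P k := by
    constructor
    · intro h
      have h2 := congrArg (fun r : ℂ[X] => r.comp (X - 1)) h
      simp only [comp_assoc] at h2
      have e1 : (X + 1 : ℂ[X]).comp (X - 1) = X := by simp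
      have e2 : (-X - C ((k : ℂ) + 1)).comp (X - 1) = -X - C (k : ℂ) := by
        simp only [sub_comp, neg_comp, X_comp, C_comp]
        rw [C_add, C_1]
        ring
      rw [e1, e2, comp_X] at h2
      exact h2.symm
    · intro h
      conv_lhs => rw [← h]
      rw [comp_assoc]
      congr 1
      simp only [sub_comp, neg_comp, X_comp, C_comp, C_add, C_1]
      ring
  rw [add_mul, mul_add, hpow, add_right_inj, sum_mul]
  simp only [hleft, hright, ← mul_sum, ← hshift]
  exact ⟨fun h => eq_of_sum_eq θ hθ s _ _ (hinj _ _ h),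
    fun h => congrArg _ (sum_congr rfl fun k hk => by rw [h k hk])⟩

/-- STATEMENT 6: let `n` be even and `D = θ^n + Σ_{k=1}^m z^k P_k(θ)` with
`deg P_k ≤ n`. Then `D` satisfies the Yifan-Yang condition `D ∘ z = z ∘ D^∨`
(where `D^∨ = (−θ−1)^n + Σ_{k=1}^m z^k P_k(−θ−k−1)`) if and only if each `P_k`
has the form `P_k(T) = Σ_{j=0}^{n/2} d_{k,j} (T + k/2)^{2j}` for some
constants `d_{k,j} ∈ ℂ`. Here `θ = z∂` is the Euler operator and `Dz` is the
derivative `d/dz` on `ℂ(z)`, characterized as the `ℂ`-linear endomorphism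
satisfying the Leibniz rule with `Dz z = 1`. -/
theorem stmt7 (n m : ℕ) (hn : Even n)
    (Dz : Module.End ℂ (RatFunc ℂ))
    (hLeib : ∀ f g : RatFunc ℂ, Dz (f * g) = f * Dz g + g * Dz f)
    (hX : Dz RatFunc.X = 1)
    (P : ℕ → Polynomial ℂ) (hdeg : ∀ k ∈ Icc 1 m, (P k).natDegree ≤ n)
    (θ : Module.End ℂ (RatFunc ℂ)) (hθ : θ = mulOp RatFunc.X * Dz) :
    ((θ ^ n + ∑ k ∈ Icc 1 m, mulOp (RatFunc.X ^ k) * aeval θ (P k)) * mulOp RatFunc.X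
        = (mulOp RatFunc.X *
            ((-θ - 1) ^ n + ∑ k ∈ Icc 1 m, mulOp (RatFunc.X ^ k) *
              aeval (-θ - (((k : ℂ) + 1) • 1 : Module.End ℂ (RatFunc ℂ))) (P k))))
    ↔ ∀ k ∈ Icc 1 m, ∃ d : ℕ → ℂ,
        P k = ∑ j ∈ range (n / 2 + 1),
          C (d j) * (X + C ((k : ℂ) / 2)) ^ (2 * j) := by
  subst hθ
  rw [yy_iff_symm n hn _ P _ (theta_pow_X Dz hLeib hX) (theta_mul_mulOp_X Dz hLeib hX)]
  have hn2 : 2 * (n / 2) = n := Nat.two_mul_div_two_of_even hn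
  exact forall₂_congr fun k hk => comp_eq_self_iff_exists _ _ _ (hn2.symm ▸ hdeg k hk)
end

section
/- Proposition (b): Let I ⊆ ℝ be an open interval and let y_0, y_1, y_2, y_3, y_5 : I → ℝ be three-times differentiable functions with y_0 nonvanishing on I; set t = y_1/y_0 and assume t′ is nonvanishing on I. If y_0 y_3′ − y_0′ y_3 = y_1 y_2′ − y_1′ y_2 and 2(y_0 y_5′ − y_0′ y_5) = y_2 y_3′ − y_2′ y_3 on I, then D_t(D_t(y_5/y_0)) = (1/2)·( t·(y_2/y_0) − y_3/y_0 ) · D_t(D_t(y_2/y_0)) on I. -/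
/-!
Write `u_i = y_i / y₀` and `t = u₁`. Dividing the two Wronskian relations by `y₀²` turns them into
`u₃′ = t u₂′ - t′ u₂` and `2 u₅′ = u₂ u₃′ - u₂′ u₃`, hence
`D_t u₃ = t D_t u₂ - u₂` and `D_t u₅ = (1/2) ((t u₂ - u₃) D_t u₂ - u₂²)` on `I`.
Differentiating the last identity once more, the first-order terms cancel because
`D_t (t u₂ - u₃) = 2 u₂`. The rest is the differentiability of `D_t u₂`, which follows from the
quotient rule (`differentiableAt_deriv_div`).
-/

/-- `DerWrt t f` is the derivative `D_t f = f′/t′` of `f` with respect to the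
local coordinate `t`. -/
noncomputable def DerWrt (t f : ℝ → ℝ) : ℝ → ℝ := fun x => deriv f x / deriv t x

/-- `f` is three-times differentiable at every point of `I`. -/
def ThreeDiffOn (f : ℝ → ℝ) (I : Set ℝ) : Prop :=
  (∀ x ∈ I, DifferentiableAt ℝ f x) ∧ (∀ x ∈ I, DifferentiableAt ℝ (deriv f) x)
    ∧ (∀ x ∈ I, DifferentiableAt ℝ (deriv (deriv f)) x)

/-- The derivative of a quotient of three-times differentiable functions is differentiable; the
quotient rule must hold near `x`, which is where openness of `I` enters. -/
lemma differentiableAt_deriv_div {I : Set ℝ} (hI : IsOpen I) {f g : ℝ → ℝ}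
    (hf : ThreeDiffOn f I) (hg : ThreeDiffOn g I) (hg0 : ∀ x ∈ I, g x ≠ 0) {x : ℝ} (hx : x ∈ I) :
    DifferentiableAt ℝ (deriv (fun s => f s / g s)) x := by
  have hquot : deriv (fun s => f s / g s) =ᶠ[nhds x]
      fun s => (deriv f s * g s - f s * deriv g s) / g s ^ 2 := by
    filter_upwards [hI.mem_nhds hx] with s hs
    exact deriv_fun_div (hf.1 s hs) (hg.1 s hs) (hg0 s hs)
  refine DifferentiableAt.congr_of_eventuallyEq ?_ hquot
  exact (((hf.2.1 x hx).mul (hg.1 x hx)).sub ((hf.1 x hx).mul (hg.2.1 x hx))).div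
    ((hg.1 x hx).pow 2) (pow_ne_zero 2 (hg0 x hx))

/-- Proposition (b): with `t = y₁/y₀` (`y₀` nonvanishing, `t′`
nonvanishing), the Wronskian relations `y₀y₃′ − y₀′y₃ = y₁y₂′ − y₁′y₂` and
`2(y₀y₅′ − y₀′y₅) = y₂y₃′ − y₂′y₃` on an open interval `I` imply
`D_t(D_t(y₅/y₀)) = (1/2)(t·(y₂/y₀) − y₃/y₀) · D_t(D_t(y₂/y₀))` on `I`. -/
theorem stmt13 (I : Set ℝ) (hI : IsOpen I)
    (y0 y1 y2 y3 y5 : ℝ → ℝ)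
    (h0 : ThreeDiffOn y0 I) (h1 : ThreeDiffOn y1 I)
    (h2 : ThreeDiffOn y2 I) (h3 : ThreeDiffOn y3 I) (h5 : ThreeDiffOn y5 I)
    (hy0 : ∀ x ∈ I, y0 x ≠ 0)
    (ht' : ∀ x ∈ I, deriv (fun s => y1 s / y0 s) x ≠ 0)
    (hW1 : ∀ x ∈ I, y0 x * deriv y3 x - deriv y0 x * y3 x
        = y1 x * deriv y2 x - deriv y1 x * y2 x)
    (hW2 : ∀ x ∈ I, 2 * (y0 x * deriv y5 x - deriv y0 x * y5 x)
        = y2 x * deriv y3 x - deriv y2 x * y3 x) :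
    ∀ x ∈ I,
      DerWrt (fun s => y1 s / y0 s)
          (DerWrt (fun s => y1 s / y0 s) (fun s => y5 s / y0 s)) x
        = (1 / 2) * ((y1 x / y0 x) * (y2 x / y0 x) - y3 x / y0 x)
            * DerWrt (fun s => y1 s / y0 s)
                (DerWrt (fun s => y1 s / y0 s) (fun s => y2 s / y0 s)) x := by
  intro x hx
  have hquot : ∀ y : ℝ → ℝ, ThreeDiffOn y I → ∀ s ∈ I, deriv (fun s => y s / y0 s) s
      = (deriv y s * y0 s - y s * deriv y0 s) / y0 s ^ 2 := fun y hy s hs =>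
    deriv_fun_div (hy.1 s hs) (h0.1 s hs) (hy0 s hs)
  have hdiff : ∀ y : ℝ → ℝ, ThreeDiffOn y I → DifferentiableAt ℝ (fun s => y s / y0 s) x :=
    fun y hy => (hy.1 x hx).fun_div (h0.1 x hx) (hy0 x hx)
  -- The Wronskian relations in terms of the quotients `u_i = y_i / y₀`.
  have hU3 : ∀ s ∈ I, deriv (fun s => y3 s / y0 s) s
      = y1 s / y0 s * deriv (fun s => y2 s / y0 s) s
        - deriv (fun s => y1 s / y0 s) s * (y2 s / y0 s) := by
    intro s hs
    rw [hquot y3 h3 s hs, hquot y2 h2 s hs, hquot y1 h1 s hs]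
    have h := hy0 s hs
    field_simp
    linear_combination y0 s * hW1 s hs
  have hU5 : ∀ s ∈ I, 2 * deriv (fun s => y5 s / y0 s) s
      = y2 s / y0 s * deriv (fun s => y3 s / y0 s) s
        - deriv (fun s => y2 s / y0 s) s * (y3 s / y0 s) := by
    intro s hs
    rw [hquot y3 h3 s hs, hquot y2 h2 s hs, hquot y5 h5 s hs]
    have h := hy0 s hs
    field_simp
    linear_combination y0 s * hW2 s hs
  have d1 := hdiff y1 h1
  have d2 := hdiff y2 h2
  have d3 := hdiff y3 h3
  have dd1 := differentiableAt_deriv_div hI h1 h0 hy0 hx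
  have dd2 := differentiableAt_deriv_div hI h2 h0 hy0 hx
  have ht := ht' x hx
  have hU3x := hU3 x hx
  clear hquot hdiff
  change _ = (1 / 2) * ((fun s => y1 s / y0 s) x * (fun s => y2 s / y0 s) x
    - (fun s => y3 s / y0 s) x) * _
  change _ = (fun s => y1 s / y0 s) x * _ - _ * (fun s => y2 s / y0 s) x at hU3x
  change ∀ s ∈ I, _ = (fun s => y1 s / y0 s) s * _ - _ * (fun s => y2 s / y0 s) s at hU3
  change ∀ s ∈ I, _ = (fun s => y2 s / y0 s) s * _ - _ * (fun s => y3 s / y0 s) s at hU5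
  generalize (fun s => y1 s / y0 s) = t at *
  generalize (fun s => y2 s / y0 s) = u2 at *
  generalize (fun s => y3 s / y0 s) = u3 at *
  generalize (fun s => y5 s / y0 s) = u5 at *
  have hg : DifferentiableAt ℝ (DerWrt t u2) x := dd2.div dd1 ht
  have hDu5 : DerWrt t u5 =ᶠ[nhds x]
      fun s => (1 / 2) * ((t s * u2 s - u3 s) * DerWrt t u2 s - u2 s ^ 2) := by
    filter_upwards [hI.mem_nhds hx] with s hs
    have h := ht' s hs
    have e3 := hU3 s hs
    have e5 := hU5 s hs
    rw [e3] at e5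
    simp only [DerWrt]
    field_simp
    linear_combination e5
  have hderiv := (((((d1.hasDerivAt.mul d2.hasDerivAt).sub d3.hasDerivAt).mul
    hg.hasDerivAt).sub (d2.hasDerivAt.pow 2)).const_mul (1 / 2 : ℝ)).congr_of_eventuallyEq hDu5
  have hgx : DerWrt t u2 x * deriv t x = deriv u2 x := div_mul_cancel₀ _ ht
  change deriv (DerWrt t u5) x / deriv t x = _ * (deriv (DerWrt t u2) x / deriv t x)
  rw [hderiv.deriv, hU3x, ← hgx]
  simp only [Pi.mul_apply, Pi.sub_apply]
  field_simp
  ring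
end

section
/- Define the sequence a_n ∈ ℚ by a_n = C(2n,n)C(4n,2n) · Σ_{k=0}^{n} C(2k,k)² C(4k,2k)² C(2n−2k, n−k)² C(4n−4k, 2n−2k)² · (1 + 4k(2H_{4k} − H_k − H_{2k} + H_{2n−2k} − 2H_{4n−4k} + H_{n−k})). Then, with the convention a_{−1} = 0, for every n ≥ 1: n^7 a_n = 128(2n−1)(4n−3)(4n−1)(128(n−1)^4 + 256(n−1)^3 + 304(n−1)^2 + 176(n−1) + 39) a_{n−1} − 2^{26} (n−1)(2n−3)(2n−1)(4n−7)(4n−5)(4n−3)(4n−1) a_{n−2}. Equivalently, the power series y_0 = Σ_{n≥0} a_n z^n is annihilated by the seventh-order operator θ^7 − 128z(2θ+1)(4θ+1)(4θ+3)(128θ^4+256θ^3+304θ^2+176θ+39) + 2^{26} z^2 (θ+1)(2θ+1)(2θ+3)(4θ+1)(4θ+3)(4θ+5)(4θ+7), where θ = z d/dz. -/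
open Finset

/-!
Put `c(k) = C(2k,k) C(4k,2k)` and `F(n,k) = c(k)² c(n-k)²`. Interpolating `c` by Gamma functions,
the harmonic numbers are its logarithmic derivative, and the inner sum is
`b_n = Σ_k d/dk [k F(n,k)]`. Since `d/dk F(n,k)` is antisymmetric under `k ↦ n - k`, also
`-2 b_n = Σ_k d/dk [(n - 2k) F(n,k)]`. The very-well-poised summand `(n - 2k) F(n,k)` admits a
creative-telescoping certificate of order two in `n`, and differentiating it in `k` yields
`n⁵ b_n - 32(2n-1)(128(n-1)⁴ + ⋯ + 39) b_{n-1} + 2²² (n-1)³(2n-3)(2n-1) b_{n-2} = 0`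
(`bb_recurrence`). Multiplying by `c(n)` and using
`(k+1)² c(k+1) = 4(4k+1)(4k+3) c(k)` turns it into the claim.

Differentiation in `k` is carried out algebraically: everything is evaluated at `k + ε` in the dual
numbers `ℚ[ε]`, `ε² = 0`, where `c²` still satisfies its hypergeometric recurrence (`dsq_succ`), and
the `ε`-coefficient is read off at the end. The boundary terms of the telescoping sum are multiples
of `ε⁴` and so vanish. The certificate is the polynomial identity `cert_identity`.
-/

open TrivSqZeroExt DualNumber

/-! ### The sequence `C(2k,k) C(4k,2k)` and its logarithmic derivative -/

/-- `c k = C(2k,k) C(4k,2k) = (4k)! / (k!² (2k)!)`. -/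
def cc (k : ℕ) : ℚ := (Nat.choose (2 * k) k : ℚ) * (Nat.choose (4 * k) (2 * k) : ℚ)

/-- The logarithmic derivative of `c` at `k`, i.e. of `Γ(4k+1) / (Γ(k+1)² Γ(2k+1))`, where the
multiples of Euler's constant cancel. -/
def logDer (k : ℕ) : ℚ := 4 * harmonic (4 * k) - 2 * harmonic k - 2 * harmonic (2 * k)

lemma cc_succ (k : ℕ) :
    ((k : ℚ) + 1) ^ 2 * cc (k + 1) = 4 * (4 * k + 3) * (4 * k + 1) * cc k := by
  have e : ∀ j : ℕ, cc j * ((j.factorial : ℚ) ^ 2 * (2 * j).factorial) = (4 * j).factorial := by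
    intro j
    have h1 := Nat.choose_mul_factorial_mul_factorial (show j ≤ 2 * j by omega)
    have h2 := Nat.choose_mul_factorial_mul_factorial (show 2 * j ≤ 4 * j by omega)
    rw [show 2 * j - j = j by omega] at h1
    rw [show 4 * j - 2 * j = 2 * j by omega] at h2
    have h1' : ((2 * j).choose j : ℚ) * j.factorial * j.factorial = (2 * j).factorial := by
      exact_mod_cast h1
    have h2' : ((4 * j).choose (2 * j) : ℚ) * (2 * j).factorial * (2 * j).factorial
        = (4 * j).factorial := by exact_mod_cast h2
    rw [← h2', cc]
    linear_combination ((4 * j).choose (2 * j) : ℚ) * (2 * j).factorial * h1'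
  have h0 := e k
  have h1 := e (k + 1)
  rw [show 4 * (k + 1) = 4 * k + 3 + 1 by ring, show 2 * (k + 1) = 2 * k + 1 + 1 by ring] at h1
  simp only [Nat.factorial_succ] at h1
  push_cast at h1
  have hk : (k.factorial : ℚ) ≠ 0 := by positivity
  have h2k : ((2 * k).factorial : ℚ) ≠ 0 := by positivity
  have hp : ((2 * k + 1 + 1) * (2 * k + 1) * ((k.factorial : ℚ) ^ 2 * (2 * k).factorial)) ≠ 0 := by
    positivity
  apply mul_right_cancel₀ hp
  linear_combination h1 - 4 * (4 * k + 3) * (4 * k + 1) * (2 * k + 2) * (2 * k + 1) * h0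

lemma logDer_succ (k : ℕ) :
    logDer (k + 1) = logDer k + 4 / (4 * k + 3) + 4 / (4 * k + 1) - 2 / (k + 1) := by
  simp only [logDer, show 4 * (k + 1) = 4 * k + 1 + 1 + 1 + 1 by ring,
    show 2 * (k + 1) = 2 * k + 1 + 1 by ring, harmonic_succ]
  push_cast
  field_simp
  ring

/-! ### First-order deformation over the dual numbers -/

/-- The value of `c²` at `k + s ε` to first order in `ε`, as a dual number. -/
def dsq (s : ℚ) (k : ℕ) : ℚ[ε] := inl (cc k ^ 2) + inl (2 * s * cc k ^ 2 * logDer k) * ε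

/-- The quadratic `(4y - 1)(4y - 3)`, which governs the ratio `c(y) / c(y - 1)`. -/
def qq {R : Type*} [CommRing R] (y : R) : R := (4 * y - 1) * (4 * y - 3)

/-- The hypergeometric recurrence of `c²` persists at the shifted argument `k + s ε`. -/
lemma dsq_succ (s : ℚ) (k : ℕ) :
    ((k : ℚ[ε]) + 1 + inl s * ε) ^ 4 * dsq s (k + 1)
      = 16 * qq ((k : ℚ[ε]) + 1 + inl s * ε) ^ 2 * dsq s k := by
  have h := cc_succ k
  have hL := logDer_succ k
  have h3 : (4 * (k : ℚ) + 3) ≠ 0 := by positivity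
  have h1 : (4 * (k : ℚ) + 1) ≠ 0 := by positivity
  have hk : ((k : ℚ) + 1) ≠ 0 := by positivity
  have h' : cc (k + 1) = 4 * (4 * k + 3) * (4 * k + 1) * cc k / ((k : ℚ) + 1) ^ 2 := by
    field_simp
    linear_combination h
  have f4 : (4 : ℚ[ε]).fst = 4 := rfl
  have f3 : (3 : ℚ[ε]).fst = 3 := rfl
  have f16 : (16 : ℚ[ε]).fst = 16 := rfl
  have s4 : (4 : ℚ[ε]).snd = 0 := rfl
  have s3 : (3 : ℚ[ε]).snd = 0 := rfl
  have s16 : (16 : ℚ[ε]).snd = 0 := rfl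
  ext
  · simp [dsq, qq, fst_pow, f4, f3, f16]
    rw [h']
    field_simp
    ring
  · simp [dsq, qq, fst_pow, snd_pow, f4, f3, f16, s4, s3, s16]
    rw [hL, h']
    field_simp
    ring

lemma eps_pow_four : (ε : ℚ[ε]) ^ 4 = 0 := by
  rw [show (ε : ℚ[ε]) ^ 4 = ε * ε * ε ^ 2 by ring, eps_mul_eps, zero_mul]

lemma isUnit_of_fst {x : ℚ[ε]} (h : x.fst ≠ 0) : IsUnit x :=
  isUnit_iff_isUnit_fst.2 (isUnit_iff_ne_zero.2 h)

/-- `(4y - 1)(4y - 3)` has no integer roots, so it is invertible at `m - ε`. -/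
lemma isUnit_sixteen_qq (m : ℤ) : IsUnit (16 * qq ((m : ℚ[ε]) - ε) ^ 2) := by
  apply isUnit_of_fst
  have f4 : (4 : ℚ[ε]).fst = 4 := rfl
  have f3 : (3 : ℚ[ε]).fst = 3 := rfl
  have f16 : (16 : ℚ[ε]).fst = 16 := rfl
  have h1 : (4 * (m : ℚ) - 1) ≠ 0 := by
    have : 4 * m - 1 ≠ 0 := by omega
    exact_mod_cast this
  have h3 : (4 * (m : ℚ) - 3) ≠ 0 := by
    have : 4 * m - 3 ≠ 0 := by omega
    exact_mod_cast this
  simp [qq, fst_pow, f4, f3, f16, h1, h3]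

/-- `c²(m - ε)` divided by `16 ((4y - 1)(4y - 3))²` at `y = m - ε`; informally this is
`c²(y - 1) / y⁴`, but it also makes sense at `m = 0`. -/
noncomputable def gg (m : ℕ) : ℚ[ε] :=
  dsq (-1) m * Ring.inverse (16 * qq (((m : ℤ) : ℚ[ε]) - ε) ^ 2)

lemma dsq_eq_gg (m : ℕ) : dsq (-1) m = 16 * qq ((m : ℚ[ε]) - ε) ^ 2 * gg m := by
  have h := Ring.mul_inverse_cancel _ (isUnit_sixteen_qq m)
  rw [gg]
  push_cast at h ⊢
  linear_combination (-dsq (-1) m) * h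

lemma dsq_eq_gg_succ (m : ℕ) : dsq (-1) m = ((m : ℚ[ε]) + 1 - ε) ^ 4 * gg (m + 1) := by
  have h := dsq_succ (-1) m
  have e : (m : ℚ[ε]) + 1 + inl (-1) * ε = (m : ℚ[ε]) + 1 - ε := by
    rw [inl_neg, inl_one]; ring
  rw [e, dsq_eq_gg (m + 1)] at h
  have hu := isUnit_sixteen_qq (m + 1)
  push_cast at h hu
  apply hu.mul_left_cancel
  linear_combination -h

/-! ### The telescoping certificate -/

section Certificate
variable {R : Type*} [CommRing R]

/-- Leading coefficient of the recurrence for the inner sums. -/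
def p0 (n : R) : R := n ^ 5
/-- Middle coefficient of the recurrence for the inner sums. -/
def p1 (n : R) : R := -32 * (2 * n - 1) *
  (128 * (n - 1) ^ 4 + 256 * (n - 1) ^ 3 + 304 * (n - 1) ^ 2 + 176 * (n - 1) + 39)
/-- Trailing coefficient of the recurrence for the inner sums. -/
def p2 (n : R) : R := 2 ^ 22 * (n - 1) ^ 3 * (2 * n - 3) * (2 * n - 1)

/-- The polynomial part of the creative-telescoping certificate for `(n - 2x) c(x)² c(n - x)²`. -/
def cert (n x : R) : R :=
  (720 * n ^ 2 - 7680 * n ^ 3 + 18432 * n ^ 4 - 12288 * n ^ 5)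
  + (-864 * n + 16896 * n ^ 2 - 51200 * n ^ 3 + 40960 * n ^ 4) * x
  + (288 - 12288 * n + 48640 * n ^ 2 - 49152 * n ^ 3) * x ^ 2
  + (3072 - 17408 * n + 24576 * n ^ 2) * x ^ 3
  + (1536 - 4096 * n) * x ^ 4

/-- The certificate identity after clearing denominators; here `m` stands for `n - x`. -/
lemma cert_identity (n x m : R) (hm : m = n - x) :
    p0 n * (n - 2 * x) * (16 * qq m ^ 2) * (16 * qq (m - 1) ^ 2)
      + p1 n * (n - 1 - 2 * x) * (16 * qq (m - 1) ^ 2) * m ^ 4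
      + p2 n * (n - 2 - 2 * x) * (m - 1) ^ 4 * m ^ 4
    = cert n (x + 1) * (16 * qq (x + 1) ^ 2) * m ^ 4
      - cert n x * x ^ 4 * (16 * qq (m - 1) ^ 2) := by
  subst hm
  simp only [p0, p1, p2, cert, qq]
  ring

end Certificate

/-- The summand `(n - 2x) c(x)² c(n - x)²` at `x = k + ε`, as a dual number, for `k ≤ n`. -/
def summand (n k : ℕ) : ℚ[ε] := ((n : ℚ[ε]) - 2 * ((k : ℚ[ε]) + ε)) * dsq 1 k * dsq (-1) (n - k)

/-- The telescoping partner of `summand`, for `k ≤ n`. -/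
noncomputable def partner (n k : ℕ) : ℚ[ε] :=
  cert (n : ℚ[ε]) ((k : ℚ[ε]) + ε) * ((k : ℚ[ε]) + ε) ^ 4 * dsq 1 k * gg (n - k)

lemma dsq_one_succ (k : ℕ) : ((k : ℚ[ε]) + ε + 1) ^ 4 * dsq 1 (k + 1)
    = 16 * qq ((k : ℚ[ε]) + ε + 1) ^ 2 * dsq 1 k := by
  have h := dsq_succ 1 k
  rwa [inl_one, show (k : ℚ[ε]) + 1 + 1 * ε = (k : ℚ[ε]) + ε + 1 by ring] at h

/-- The telescoping relation before the factor `c²(k + ε)` is restored. The index `m` plays the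
role of `n - k - 1`, and `(m - ε)⁴ gg m` is `c²` at `m - 1 - ε` when `m ≥ 1`. -/
lemma gg_relation (m k : ℕ) (n : ℚ[ε]) (hn : n = m + k + 1) :
    p0 n * (n - 2 * ((k : ℚ[ε]) + ε)) * dsq (-1) (m + 1)
      + p1 n * (n - 1 - 2 * ((k : ℚ[ε]) + ε)) * dsq (-1) m
      + p2 n * (n - 2 - 2 * ((k : ℚ[ε]) + ε)) * (((m : ℚ[ε]) - ε) ^ 4 * gg m)
    = cert n ((k : ℚ[ε]) + ε + 1) * (16 * qq ((k : ℚ[ε]) + ε + 1) ^ 2) * gg m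
      - cert n ((k : ℚ[ε]) + ε) * ((k : ℚ[ε]) + ε) ^ 4 * gg (m + 1) := by
  have hu : IsUnit (((m : ℚ[ε]) + 1 - ε) ^ 4) := by
    apply isUnit_of_fst
    have : (m : ℚ) + 1 ≠ 0 := by positivity
    simpa [fst_pow] using this
  have h0 := dsq_eq_gg (m + 1)
  have h1 := dsq_eq_gg_succ m
  have h2 := dsq_eq_gg m
  have hc := cert_identity n ((k : ℚ[ε]) + ε) ((m : ℚ[ε]) + 1 - ε) (by rw [hn]; ring)
  rw [show (m : ℚ[ε]) + 1 - ε - 1 = (m : ℚ[ε]) - ε by ring] at hc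
  push_cast at h0
  apply hu.mul_left_cancel
  -- Both `gg (m + 1)` and `dsq (-1) m` are eliminated in favour of `gg m`.
  have h3 := h1.symm.trans h2
  rw [h0, h2]
  linear_combination gg m * hc + (p0 n * (n - 2 * ((k : ℚ[ε]) + ε)) * (16 * qq ((m : ℚ[ε]) + 1 - ε) ^ 2)
    + cert n ((k : ℚ[ε]) + ε) * ((k : ℚ[ε]) + ε) ^ 4) * h3

/-- Telescoping relation in the range where all three summands are present. -/
lemma step_interior (j k : ℕ) :
    p0 ((j + k + 2 : ℕ) : ℚ[ε]) * summand (j + k + 2) k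
      + p1 ((j + k + 2 : ℕ) : ℚ[ε]) * summand (j + k + 1) k
      + p2 ((j + k + 2 : ℕ) : ℚ[ε]) * summand (j + k) k
    = partner (j + k + 2) (k + 1) - partner (j + k + 2) k := by
  have h := gg_relation (j + 1) k ((j + k + 2 : ℕ) : ℚ[ε]) (by push_cast; ring)
  have hs := dsq_one_succ k
  have hg := dsq_eq_gg_succ j
  simp only [summand, partner, show j + k + 2 - k = j + 1 + 1 by omega,
    show j + k + 1 - k = j + 1 by omega, show j + k - k = j by omega,
    show j + k + 2 - (k + 1) = j + 1 by omega]
  generalize hN : ((j + k + 2 : ℕ) : ℚ[ε]) = N at *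
  have h1 : ((j + k + 1 : ℕ) : ℚ[ε]) = N - 1 := by rw [← hN]; push_cast; ring
  have h2 : ((j + k : ℕ) : ℚ[ε]) = N - 2 := by rw [← hN]; push_cast; ring
  rw [h1, h2]
  push_cast at h ⊢
  rw [← hg] at h
  rw [show (k : ℚ[ε]) + 1 + ε = (k : ℚ[ε]) + ε + 1 by ring]
  linear_combination dsq 1 k * h - cert N ((k : ℚ[ε]) + ε + 1) * gg (j + 1) * hs

/-- Telescoping relation at `k = n - 1`, where the third summand vanishes to order `ε⁴`. -/
lemma step_penultimate (k : ℕ) :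
    p0 ((k + 1 : ℕ) : ℚ[ε]) * summand (k + 1) k + p1 ((k + 1 : ℕ) : ℚ[ε]) * summand k k
    = partner (k + 1) (k + 1) - partner (k + 1) k := by
  have h := gg_relation 0 k ((k + 1 : ℕ) : ℚ[ε]) (by push_cast; ring)
  have hs := dsq_one_succ k
  simp only [summand, partner, show k + 1 - k = 0 + 1 by omega, Nat.sub_self]
  generalize hN : ((k + 1 : ℕ) : ℚ[ε]) = N at *
  have h1 : (k : ℚ[ε]) = N - 1 := by rw [← hN]; push_cast; ring
  have h4 := eps_pow_four
  push_cast at h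
  rw [show (N + ε : ℚ[ε]) = (k : ℚ[ε]) + ε + 1 by rw [h1]; ring]
  linear_combination dsq 1 k * h - cert N ((k : ℚ[ε]) + ε + 1) * gg 0 * hs
    - dsq 1 k * p2 N * (N - 2 - 2 * ((k : ℚ[ε]) + ε)) * gg 0 * h4
    + p1 N * dsq 1 k * dsq (-1) 0 * h1

/-- Telescoping relation at `k = n`, where only the first summand survives. -/
lemma step_last (n : ℕ) : p0 (n : ℚ[ε]) * summand n n = -partner n n := by
  have hc := cert_identity (n : ℚ[ε]) ((n : ℚ[ε]) + ε) (-ε) (by ring)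
  have h4 : (-ε : ℚ[ε]) ^ 4 = 0 := by rw [neg_pow, eps_pow_four, mul_zero]
  have hu := isUnit_sixteen_qq (-1)
  rw [show (((-1 : ℤ) : ℚ[ε]) - ε) = -ε - 1 by push_cast; ring] at hu
  have h0 := dsq_eq_gg 0
  rw [show (((0 : ℕ) : ℚ[ε]) - ε) = -ε by push_cast; ring] at h0
  rw [h4] at hc
  simp only [summand, partner, Nat.sub_self]
  apply hu.mul_left_cancel
  rw [h0]
  linear_combination dsq 1 n * gg 0 * hc

lemma partner_zero (n : ℕ) : partner n 0 = 0 := by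
  simp [partner, eps_pow_four]

/-- The recurrence for the sums of the deformed summands. -/
lemma sum_summand_recurrence (N : ℕ) :
    p0 ((N + 2 : ℕ) : ℚ[ε]) * ∑ k ∈ range (N + 3), summand (N + 2) k
      + p1 ((N + 2 : ℕ) : ℚ[ε]) * ∑ k ∈ range (N + 2), summand (N + 1) k
      + p2 ((N + 2 : ℕ) : ℚ[ε]) * ∑ k ∈ range (N + 1), summand N k = 0 := by
  have hin : ∑ k ∈ range (N + 1), (p0 ((N + 2 : ℕ) : ℚ[ε]) * summand (N + 2) k
      + p1 ((N + 2 : ℕ) : ℚ[ε]) * summand (N + 1) k + p2 ((N + 2 : ℕ) : ℚ[ε]) * summand N k)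
      = partner (N + 2) (N + 1) := by
    rw [← sub_zero (partner (N + 2) (N + 1)), ← partner_zero (N + 2), ← sum_range_sub]
    refine sum_congr rfl fun k hk => ?_
    obtain ⟨j, rfl⟩ : ∃ j, N = j + k := ⟨N - k, by have := mem_range.1 hk; omega⟩
    exact step_interior j k
  rw [sum_add_distrib, sum_add_distrib, ← mul_sum, ← mul_sum, ← mul_sum] at hin
  have h1 := step_penultimate (N + 1)
  have h2 := step_last (N + 2)
  rw [show N + 1 + 1 = N + 2 by ring] at h1
  rw [sum_range_succ _ (N + 2), sum_range_succ _ (N + 1), sum_range_succ (summand (N + 1)) (N + 1)]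
  linear_combination hin + h1 + h2

/-! ### Extraction of the `ε`-coefficient -/

/-- The inner sum of the theorem, `Σ_k d/dk [k c(k)² c(n-k)²]`. -/
def bb (n : ℕ) : ℚ := ∑ k ∈ range (n + 1),
  cc k ^ 2 * cc (n - k) ^ 2 * (1 + 2 * k * (logDer k - logDer (n - k)))

/-- The difference between `-2 bb n` and the `ε`-coefficient is `n Σ_k d/dk [c(k)² c(n-k)²]`,
which vanishes because its terms are antisymmetric under `k ↦ n - k`. -/
lemma snd_sum_summand (n : ℕ) : (∑ k ∈ range (n + 1), summand n k).snd = -2 * bb n := by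
  have hanti : ∑ k ∈ range (n + 1), cc k ^ 2 * cc (n - k) ^ 2 * (logDer k - logDer (n - k)) = 0 := by
    have h := sum_range_reflect
      (fun k => cc k ^ 2 * cc (n - k) ^ 2 * (logDer k - logDer (n - k))) (n + 1)
    have h' : ∑ k ∈ range (n + 1), cc (n + 1 - 1 - k) ^ 2 * cc (n - (n + 1 - 1 - k)) ^ 2
        * (logDer (n + 1 - 1 - k) - logDer (n - (n + 1 - 1 - k)))
        = -∑ k ∈ range (n + 1), cc k ^ 2 * cc (n - k) ^ 2 * (logDer k - logDer (n - k)) := by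
      rw [← sum_neg_distrib]
      refine sum_congr rfl fun k hk => ?_
      have := mem_range.1 hk
      rw [show n + 1 - 1 - k = n - k by omega, show n - (n - k) = k by omega]
      ring
    rw [h'] at h
    linarith
  have f2 : (2 : ℚ[ε]).fst = 2 := rfl
  have s2 : (2 : ℚ[ε]).snd = 0 := rfl
  rw [snd_sum, ← sub_zero (-2 * bb n), ← mul_zero (-(2 * (n : ℚ))), ← hanti, bb, mul_sum, mul_sum,
    ← sum_sub_distrib]
  refine sum_congr rfl fun k _ => ?_
  simp [summand, dsq, f2, s2]
  ring

lemma bb_recurrence (N : ℕ) :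
    p0 ((N : ℚ) + 2) * bb (N + 2) + p1 ((N : ℚ) + 2) * bb (N + 1) + p2 ((N : ℚ) + 2) * bb N = 0 := by
  have h := congrArg TrivSqZeroExt.snd (sum_summand_recurrence N)
  have hp (p : ℚ) (t : ℚ[ε]) : (inl p * t).snd = p * t.snd := by simp
  have hN : ((N + 2 : ℕ) : ℚ[ε]) = inlHom ℚ ℚ ((N : ℚ) + 2) := by
    rw [map_add, map_natCast, map_ofNat]; push_cast; rfl
  have e0 : p0 ((N + 2 : ℕ) : ℚ[ε]) = inl (p0 ((N : ℚ) + 2)) := by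
    rw [hN, ← inlHom_apply]; simp [p0, -inlHom_apply, map_ofNat]
  have e1 : p1 ((N + 2 : ℕ) : ℚ[ε]) = inl (p1 ((N : ℚ) + 2)) := by
    rw [hN, ← inlHom_apply]; simp [p1, -inlHom_apply, map_ofNat]
  have e2 : p2 ((N + 2 : ℕ) : ℚ[ε]) = inl (p2 ((N : ℚ) + 2)) := by
    rw [hN, ← inlHom_apply]; simp [p2, -inlHom_apply, map_ofNat]
  rw [e0, e1, e2, snd_add, snd_add, hp, hp, hp, snd_sum_summand, snd_sum_summand (N + 1), snd_sum_summand,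
    snd_zero] at h
  linarith


/-- Case C: the sequence
`a_n = C(2n,n)C(4n,2n) Σ_{k=0}^n C(2k,k)²C(4k,2k)²C(2n−2k,n−k)²C(4n−4k,2n−2k)²
       (1 + 4k(2H_{4k} − H_k − H_{2k} + H_{2n−2k} − 2H_{4n−4k} + H_{n−k}))`
satisfies, for all `n ≥ 1` (with `a_{−1} = 0`, encoded by the vanishing factor
`(n−1)` at `n = 1`):
`n⁷ a_n = 128(2n−1)(4n−3)(4n−1)(128(n−1)⁴+256(n−1)³+304(n−1)²+176(n−1)+39) a_{n−1}
          − 2²⁶ (n−1)(2n−3)(2n−1)(4n−7)(4n−5)(4n−3)(4n−1) a_{n−2}`;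
i.e. `y₀ = Σ a_n zⁿ` is annihilated by
`θ⁷ − 128z(2θ+1)(4θ+1)(4θ+3)(128θ⁴+256θ³+304θ²+176θ+39)
     + 2²⁶z²(θ+1)(2θ+1)(2θ+3)(4θ+1)(4θ+3)(4θ+5)(4θ+7)`. -/
theorem stmt17 (H : ℕ → ℚ) (hH : ∀ n, H n = ∑ i ∈ range n, (1 : ℚ) / (i + 1))
    (a : ℕ → ℚ)
    (ha : ∀ n, a n = (Nat.choose (2 * n) n : ℚ) * (Nat.choose (4 * n) (2 * n) : ℚ) *
        ∑ k ∈ range (n + 1),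
          (Nat.choose (2 * k) k : ℚ) ^ 2 * (Nat.choose (4 * k) (2 * k) : ℚ) ^ 2
            * (Nat.choose (2 * n - 2 * k) (n - k) : ℚ) ^ 2
            * (Nat.choose (4 * n - 4 * k) (2 * n - 2 * k) : ℚ) ^ 2
            * (1 + 4 * (k : ℚ)
                * (2 * H (4 * k) - H k - H (2 * k) + H (2 * n - 2 * k)
                    - 2 * H (4 * n - 4 * k) + H (n - k)))) :
    ∀ n : ℕ, 1 ≤ n →
      (n : ℚ) ^ 7 * a n
        = 128 * (2 * (n : ℚ) - 1) * (4 * (n : ℚ) - 3) * (4 * (n : ℚ) - 1)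
            * (128 * ((n : ℚ) - 1) ^ 4 + 256 * ((n : ℚ) - 1) ^ 3
                + 304 * ((n : ℚ) - 1) ^ 2 + 176 * ((n : ℚ) - 1) + 39) * a (n - 1)
          - 2 ^ 26 * ((n : ℚ) - 1) * (2 * (n : ℚ) - 3) * (2 * (n : ℚ) - 1)
            * (4 * (n : ℚ) - 7) * (4 * (n : ℚ) - 5) * (4 * (n : ℚ) - 3)
            * (4 * (n : ℚ) - 1) * a (n - 2) := by
  obtain rfl : H = harmonic := by
    funext n
    rw [hH, harmonic]
    simp
  have ha' : ∀ n, a n = cc n * bb n := by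
    intro n
    rw [ha, bb, cc]
    congr 1
    refine sum_congr rfl fun k _ => ?_
    simp only [cc, logDer, Nat.mul_sub]
    ring
  intro n hn
  obtain rfl | ⟨N, rfl⟩ : n = 1 ∨ ∃ N, n = N + 2 := by
    obtain _ | _ | N := n
    · omega
    · exact Or.inl rfl
    · exact Or.inr ⟨N, rfl⟩
  · simp [ha', bb, cc, logDer, sum_range_succ, harmonic, Nat.choose]
    norm_num
  · have hb := bb_recurrence N
    have h0 := cc_succ N
    have h1 := cc_succ (N + 1)
    rw [show N + 2 - 1 = N + 1 by omega, show N + 2 - 2 = N by omega, ha', ha', ha']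
    simp only [p0, p1, p2] at hb
    push_cast at h0 h1 ⊢
    have hN1 : ((N : ℚ) + 1) ^ 2 ≠ 0 := by positivity
    have hN2 : ((N : ℚ) + 2) ^ 2 ≠ 0 := by positivity
    have hc1 : cc (N + 1) = 4 * (4 * N + 3) * (4 * N + 1) * cc N / ((N : ℚ) + 1) ^ 2 := by
      rw [eq_div_iff hN1]; linear_combination h0
    have hc2 : cc (N + 2) = 4 * (4 * N + 7) * (4 * N + 5) * cc (N + 1) / ((N : ℚ) + 2) ^ 2 := by
      rw [eq_div_iff hN2]; linear_combination h1
    rw [hc2, hc1]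
    field_simp
    linear_combination (4 * (4 * N + 7) * (4 * N + 5) * (4 * (4 * N + 3) * (4 * N + 1) * cc N)) * hb
end
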